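/- Let c > 0 and let σ be a Borel probability measure on ℝ whose support is contained in [0,c]. Let μ be the pushforward of σ under the map r ↦ (r, c − r). Then μ is a Borel probability measure on ℝ² giving full measure to the line segment {(s,t) : s ≥ 0, t ≥ 0, s + t = c}, and for all k₁, k₂ ∈ ℕ the moments γ_{(k₁,k₂)} := ∫ s^{k₁} t^{k₂} dμ(s,t) satisfy γ_{(k₁+1,k₂)} + γ_{(k₁,k₂+1)} = c · γ_{(k₁,k₂)}, and additionally γ_{(k,0)} = ∫ r^k dσ(r) for all k ∈ ℕ. -/

import Mathlib

open MeasureTheory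

/-- The (topological) support of a Borel measure: the set of points all of whose
open neighborhoods have positive measure. -/
def msupp {X : Type*} [TopologicalSpace X] [MeasurableSpace X] (μ : Measure X) : Set X :=
  {x | ∀ U : Set X, IsOpen U → x ∈ U → 0 < μ U}

/-!
On the line `s + t = c` one has
`s ^ (k₁ + 1) * t ^ k₂ + s ^ k₁ * t ^ (k₂ + 1) = c * (s ^ k₁ * t ^ k₂)`; integrating this identity
gives the moment recurrence for every measure concentrated on a compact part of that line. The map
`r ↦ (r, c - r)` carries `[0, c]` onto the part of the line in the closed first quadrant, and it is
a section of the first projection, so the first marginal of the pushforward is `σ`.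
-/

theorem msupp_eq_support {X : Type*} [TopologicalSpace X] [MeasurableSpace X] (μ : Measure X) :
    msupp μ = μ.support := by
  ext x
  simp only [msupp, Measure.support_eq_forall_isOpen, Set.mem_ofPred_eq]
  exact forall_congr' fun U => forall_comm

theorem ae_mem_of_msupp_subset {X : Type*} [TopologicalSpace X] [MeasurableSpace X]
    [HereditarilyLindelofSpace X] {μ : Measure X} {s : Set X} (h : msupp μ ⊆ s) :
    ∀ᵐ x ∂μ, x ∈ s :=
  Filter.mem_of_superset Measure.support_mem_ae (msupp_eq_support μ ▸ h)

theorem integrable_of_continuousOn_of_ae_mem_isCompact {X E : Type*} [TopologicalSpace X]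
    [T2Space X] [MeasurableSpace X] [OpensMeasurableSpace X] [NormedAddCommGroup E]
    {μ : Measure X} [IsFiniteMeasureOnCompacts μ] {K : Set X} {f : X → E}
    (hK : IsCompact K) (hf : ContinuousOn f K) (hμ : ∀ᵐ x ∂μ, x ∈ K) : Integrable f μ := by
  rw [← Measure.restrict_eq_self_of_ae_mem hμ]
  exact hf.integrableOn_compact hK

section Moments

variable {𝕜 : Type*} [RCLike 𝕜] {c : 𝕜}

theorem integral_pow_mul_pow_recurrence_of_ae_add_eq {α : Type*} [MeasurableSpace α]
    {μ : Measure α} {f g : α → 𝕜} {k₁ k₂ : ℕ} (hfg : ∀ᵐ a ∂μ, f a + g a = c)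
    (hf : Integrable (fun a => f a ^ (k₁ + 1) * g a ^ k₂) μ)
    (hg : Integrable (fun a => f a ^ k₁ * g a ^ (k₂ + 1)) μ) :
    ∫ a, f a ^ (k₁ + 1) * g a ^ k₂ ∂μ + ∫ a, f a ^ k₁ * g a ^ (k₂ + 1) ∂μ =
      c * ∫ a, f a ^ k₁ * g a ^ k₂ ∂μ := by
  rw [← integral_add hf hg, ← integral_const_mul]
  refine integral_congr_ae ?_
  filter_upwards [hfg] with a ha
  rw [← ha]
  ring

theorem integral_pow_mul_pow_recurrence_of_ae_mem_isCompact {μ : Measure (𝕜 × 𝕜)}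
    [IsFiniteMeasureOnCompacts μ] {K : Set (𝕜 × 𝕜)} (hK : IsCompact K)
    (hKc : ∀ x ∈ K, x.1 + x.2 = c) (hμ : ∀ᵐ x ∂μ, x ∈ K) (k₁ k₂ : ℕ) :
    ∫ x, x.1 ^ (k₁ + 1) * x.2 ^ k₂ ∂μ + ∫ x, x.1 ^ k₁ * x.2 ^ (k₂ + 1) ∂μ =
      c * ∫ x, x.1 ^ k₁ * x.2 ^ k₂ ∂μ := by
  have integrable_monomial (i j : ℕ) : Integrable (fun x : 𝕜 × 𝕜 => x.1 ^ i * x.2 ^ j) μ :=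
    integrable_of_continuousOn_of_ae_mem_isCompact hK (by fun_prop) hμ
  exact integral_pow_mul_pow_recurrence_of_ae_add_eq (hμ.mono hKc)
    (integrable_monomial _ _) (integrable_monomial _ _)

end Moments

section Antidiagonal

open Set

variable {G : Type*} [AddCommGroup G] [PartialOrder G] [IsOrderedAddMonoid G]

theorem image_prodMk_sub_Icc_zero (c : G) :
    (fun r => (r, c - r)) '' Icc 0 c = antidiagonal (Ici 0) (Ici 0) c := by
  ext ⟨s, t⟩
  simp only [mem_image, mem_Icc, mem_antidiagonal, mem_Ici, Prod.mk.injEq]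
  constructor
  · rintro ⟨r, ⟨hr₀, hrc⟩, rfl, rfl⟩
    exact ⟨hr₀, sub_nonneg.2 hrc, add_sub_cancel r c⟩
  · rintro ⟨hs, ht, rfl⟩
    exact ⟨s, ⟨hs, le_add_of_nonneg_right ht⟩, rfl, add_sub_cancel_left s t⟩

variable [TopologicalSpace G] [ContinuousSub G] [CompactIccSpace G]

theorem isCompact_antidiagonal_Ici_zero (c : G) :
    IsCompact (antidiagonal (Ici 0) (Ici 0) c) := by
  rw [← image_prodMk_sub_Icc_zero]
  exact isCompact_Icc.image (by fun_prop)

theorem ae_map_prodMk_sub_mem_antidiagonal [T2Space G] [MeasurableSpace G] [MeasurableSub G]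
    [OpensMeasurableSpace (G × G)] {σ : Measure G} {c : G} (hσ : ∀ᵐ r ∂σ, r ∈ Icc 0 c) :
    ∀ᵐ x ∂σ.map (fun r => (r, c - r)), x ∈ antidiagonal (Ici 0) (Ici 0) c := by
  refine (ae_map_iff (by fun_prop) (isCompact_antidiagonal_Ici_zero c).measurableSet).2 ?_
  filter_upwards [hσ] with r hr
  exact (image_prodMk_sub_Icc_zero c).subset (mem_image_of_mem _ hr)

end Antidiagonal

theorem integral_comp_fst_map_prodMk {α β E : Type*} [MeasurableSpace α] [MeasurableSpace β]
    [NormedAddCommGroup E] [NormedSpace ℝ E] {σ : Measure α} {f : α → E} {g : α → β}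
    (hg : AEMeasurable g σ) (hf : AEStronglyMeasurable f σ) :
    ∫ x, f x.1 ∂σ.map (fun a => (a, g a)) = ∫ a, f a ∂σ := by
  have hfst : (σ.map fun a => (a, g a)).map Prod.fst = σ :=
    (Measure.fst_map_prodMk₀ hg).trans Measure.map_id
  rw [← integral_map measurable_fst.aemeasurable (hfst.symm ▸ hf), hfst]

/-- Every subnormal unilateral weighted shift admits a spherically quasinormal
embedding, obtained by pushing forward its Berger measure under `r ↦ (r, c - r)`. -/
theorem stmt_1 (c : ℝ) (hc : 0 < c)
    (σ : Measure ℝ) [IsProbabilityMeasure σ] (hsupp : msupp σ ⊆ Set.Icc (0 : ℝ) c)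
    (μ : Measure (ℝ × ℝ)) (hμ : μ = σ.map (fun r => (r, c - r)))
    (γ : ℕ → ℕ → ℝ) (hγ : ∀ k₁ k₂ : ℕ, γ k₁ k₂ = ∫ x : ℝ × ℝ, x.1 ^ k₁ * x.2 ^ k₂ ∂μ) :
    IsProbabilityMeasure μ ∧
    μ {x : ℝ × ℝ | 0 ≤ x.1 ∧ 0 ≤ x.2 ∧ x.1 + x.2 = c} = 1 ∧
    (∀ k₁ k₂ : ℕ, γ (k₁ + 1) k₂ + γ k₁ (k₂ + 1) = c * γ k₁ k₂) ∧
    (∀ k : ℕ, γ k 0 = ∫ r : ℝ, r ^ k ∂σ) := by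
  have hcompact := isCompact_antidiagonal_Ici_zero c
  have hprob : IsProbabilityMeasure μ :=
    hμ ▸ Measure.isProbabilityMeasure_map (by fun_prop)
  have hsegment : ∀ᵐ x ∂μ, x ∈ Set.antidiagonal (Set.Ici 0) (Set.Ici 0) c :=
    hμ ▸ ae_map_prodMk_sub_mem_antidiagonal (ae_mem_of_msupp_subset hsupp)
  refine ⟨hprob, ?_, fun k₁ k₂ => ?_, fun k => ?_⟩
  · exact (mem_ae_iff_prob_eq_one hcompact.measurableSet).1 hsegment
  · simpa only [hγ] using integral_pow_mul_pow_recurrence_of_ae_mem_isCompact hcompact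
      (fun x hx => (Set.mem_antidiagonal.1 hx).2.2) hsegment k₁ k₂
  · simp only [hγ, hμ, pow_zero, mul_one]
    exact integral_comp_fst_map_prodMk (f := fun r => r ^ k) (by fun_prop) (by fun_prop)
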